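/- Let d : ℕ → ℕ with d(m) ≥ 1 for all m, and for each m let B(m) and C(m) be d(m)×d(m) real matrices; write b(m) = β₁(B(m)) and c(m) = β₁(C(m)). Assume: (i) β₁((B(m) − b(m)·I)²·(C(m) − c(m)·I)) → 0 as m → ∞; (ii) β₁(B(m)·C(m)) − b(m)·c(m) → 0 as m → ∞; (iii) the sequence (b(m)) is bounded. Then β₁(B(m)²·C(m)) − β₂(B(m))·β₁(C(m)) → 0 as m → ∞. -/

import Mathlib

open Matrix Filter

/-- `β₁(A) = (1/m)·tr(A)` for an `m × m` real matrix. -/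
noncomputable def beta1 {m : ℕ} (A : Matrix (Fin m) (Fin m) ℝ) : ℝ :=
  A.trace / m

/-- `β₂(A) = (1/m)·tr(A²)` for an `m × m` real matrix. -/
noncomputable def beta2 {m : ℕ} (A : Matrix (Fin m) (Fin m) ℝ) : ℝ :=
  (A ^ 2).trace / m

/-!
Let `φ` be a unital linear functional on an algebra, with `φ x = a` and `φ y = c`. Since scalars are
central, `(x - a)² (y - c)` expands as if `x` and `y` commuted, and applying `φ` gives
`φ (x² y) - φ (x²) φ y = φ ((x - a)² (y - c)) + 2 a (φ (x y) - a c)`.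
Freeness kills the first term on the right; in the second, a bounded factor multiplies a null one.
The normalized trace `β₁` is such a functional in every positive dimension.
-/

section UnitalFunctional

variable {R A : Type*} [CommRing R] [Ring A] [Algebra R A]

theorem sub_smul_one_sq_mul_sub_smul_one (x y : A) (a c : R) :
    (x - a • (1 : A)) ^ 2 * (y - c • (1 : A)) =
      x ^ 2 * y - (2 * a) • (x * y) + a ^ 2 • y
        - c • x ^ 2 + (2 * a * c) • x - (a ^ 2 * c) • (1 : A) := by
  simp only [pow_two, sub_mul, mul_sub, smul_mul_assoc, mul_smul_comm, one_mul, mul_one]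
  module

theorem map_sq_mul_sub_map_sq_mul_map (φ : A →ₗ[R] R) (hφ : φ 1 = 1) (x y : A) :
    φ (x ^ 2 * y) - φ (x ^ 2) * φ y =
      φ ((x - φ x • (1 : A)) ^ 2 * (y - φ y • (1 : A)))
        + 2 * (φ x * (φ (x * y) - φ x * φ y)) := by
  rw [sub_smul_one_sq_mul_sub_smul_one]
  simp only [map_add, map_sub, map_smul, smul_eq_mul, hφ]
  ring

end UnitalFunctional

theorem beta1_sq_mul_sub_of_centered_tendsto_zero_general
    {ι R : Type*} {A : ι → Type*} [SeminormedCommRing R] [∀ i, Ring (A i)] [∀ i, Algebra R (A i)]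
    {l : Filter ι} (φ : ∀ i, A i →ₗ[R] R) (hφ : ∀ i, φ i 1 = 1) (x y : ∀ i, A i)
    (hfree : Tendsto (fun i =>
        φ i ((x i - φ i (x i) • (1 : A i)) ^ 2 * (y i - φ i (y i) • (1 : A i)))) l (nhds 0))
    (hmul : Tendsto (fun i => φ i (x i * y i) - φ i (x i) * φ i (y i)) l (nhds 0))
    (hbdd : l.IsBoundedUnder (· ≤ ·) fun i => ‖φ i (x i)‖) :
    Tendsto (fun i => φ i (x i ^ 2 * y i) - φ i (x i ^ 2) * φ i (y i)) l (nhds 0) := by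
  have hprod : Tendsto (fun i => φ i (x i) * (φ i (x i * y i) - φ i (x i) * φ i (y i)))
      l (nhds 0) :=
    isBoundedUnder_le_mul_tendsto_zero hbdd hmul
  simp only [map_sq_mul_sub_map_sq_mul_map (φ _) (hφ _)]
  simpa only [mul_zero, add_zero] using hfree.add (hprod.const_mul 2)

/-- The normalized trace `β₁` as a linear functional on `m × m` real matrices. For `m = 0` it is the
zero functional. -/
noncomputable def beta1LinearMap (m : ℕ) : Matrix (Fin m) (Fin m) ℝ →ₗ[ℝ] ℝ where
  toFun := beta1
  map_add' A B := by simp only [beta1, trace_add, add_div]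
  map_smul' r A := by simp only [beta1, trace_smul, smul_eq_mul, mul_div_assoc, RingHom.id_apply]

theorem beta1_one {m : ℕ} (hm : m ≠ 0) : beta1 (1 : Matrix (Fin m) (Fin m) ℝ) = 1 := by
  rw [beta1, trace_one, Fintype.card_fin, div_self (Nat.cast_ne_zero.mpr hm)]

/-- under the asymptotic freeness condition
`β₁((B − bI)²(C − cI)) → 0`, together with `β₁(BC) − bc → 0` and boundedness of
`(b(m))`, it follows that `β₁(B²C) − β₂(B)·β₁(C) → 0`. -/
theorem beta1_sq_mul_sub_of_centered_tendsto_zero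
    (d : ℕ → ℕ) (hd : ∀ m, 1 ≤ d m)
    (B C : ∀ m, Matrix (Fin (d m)) (Fin (d m)) ℝ)
    (b c : ℕ → ℝ)
    (hb : ∀ m, b m = beta1 (B m)) (hc : ∀ m, c m = beta1 (C m))
    (hfree : Tendsto (fun m =>
        beta1 ((B m - b m • (1 : Matrix (Fin (d m)) (Fin (d m)) ℝ)) ^ 2 *
               (C m - c m • (1 : Matrix (Fin (d m)) (Fin (d m)) ℝ))))
      atTop (nhds 0))
    (hmul : Tendsto (fun m => beta1 (B m * C m) - b m * c m) atTop (nhds 0))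
    (hbdd : ∃ M : ℝ, ∀ m, |b m| ≤ M) :
    Tendsto (fun m => beta1 (B m ^ 2 * C m) - beta2 (B m) * beta1 (C m))
      atTop (nhds 0) := by
  obtain rfl : b = fun m => beta1 (B m) := funext hb
  obtain rfl : c = fun m => beta1 (C m) := funext hc
  exact beta1_sq_mul_sub_of_centered_tendsto_zero_general (fun m => beta1LinearMap (d m))
    (fun m => beta1_one (Nat.one_le_iff_ne_zero.mp (hd m))) B C hfree hmul
    (isBoundedUnder_of hbdd)
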